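/- Let θ > 0 and suppose ξ ∈ ℝ satisfies E[(ξ−Y)·Y·1{Y≤ξ}] = (E[Y] − θ)·E[(ξ−Y)·1{Y≤ξ}]. Set λ := 1 / E[(ξ−Y)·1{Y≤ξ}] (the denominator is strictly positive) and h*(y) := λ·(ξ−y)·1{y≤ξ}. Then h* ≥ 0, ∫ h* dμ = 1, ∫ y·h*(y) dμ(y) = E[Y] − θ, and for every measurable h : ℝ → [0,∞) with ∫ h dμ = 1 and ∫ y·h(y) dμ(y) ≤ E[Y] − θ, one has ∫ h² dμ ≥ ∫ (h*)² dμ. (Closed-form solution of the sensitivity-value program: minimal second moment under the mean-1, nonnegativity and outcome-shift constraints.) -/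

import Mathlib

open MeasureTheory

/-- Closed-form solution of the sensitivity-value program: with `ξ` solving the
root equation, `λ = 1 / E[(ξ-Y) 1{Y≤ξ}]` and `h*(y) = λ (ξ-y) 1{y≤ξ}`, the weight `h*`
is nonnegative, has mean one, attains `∫ y h*(y) dμ = E[Y] - θ`, and minimizes the second
moment among all nonnegative mean-one weights `h` with `∫ y h(y) dμ ≤ E[Y] - θ`. -/
theorem stmt_7 (μ : Measure ℝ) [IsProbabilityMeasure μ] (p : ℝ → ℝ)
    (hp_cont : Continuous p) (hp_pos : ∀ x, 0 < p x)
    (hμ : μ = MeasureTheory.volume.withDensity fun x => ENNReal.ofReal (p x))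
    (hmom : Integrable (fun y => y ^ 2) μ)
    (θ : ℝ) (hθ : 0 < θ) (ξ : ℝ)
    (hroot : (∫ y in Set.Iic ξ, (ξ - y) * y ∂μ) =
      ((∫ y, y ∂μ) - θ) * ∫ y in Set.Iic ξ, (ξ - y) ∂μ)
    (lam : ℝ) (hlam : lam = (∫ y in Set.Iic ξ, (ξ - y) ∂μ)⁻¹)
    (hstar : ℝ → ℝ) (hhstar : ∀ y, hstar y = if y ≤ ξ then lam * (ξ - y) else 0) :
    0 < (∫ y in Set.Iic ξ, (ξ - y) ∂μ) ∧
    (∀ y, 0 ≤ hstar y) ∧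
    (∫ y, hstar y ∂μ) = 1 ∧
    (∫ y, y * hstar y ∂μ) = (∫ y, y ∂μ) - θ ∧
    ∀ h : ℝ → ℝ, Measurable h → (∀ y, 0 ≤ h y) →
      (∫ y, h y ∂μ) = 1 → (∫ y, y * h y ∂μ) ≤ (∫ y, y ∂μ) - θ →
      (∫⁻ y, ENNReal.ofReal (hstar y ^ 2) ∂μ) ≤ ∫⁻ y, ENNReal.ofReal (h y ^ 2) ∂μ := by
  have hmeas2 : MemLp (fun y : ℝ => y) 2 μ :=
    (memLp_two_iff_integrable_sq measurable_id.aestronglyMeasurable).2 hmom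
  have hy : Integrable (fun y : ℝ => y) μ := hmeas2.integrable (by norm_num)
  have hxy : Integrable (fun y : ℝ => ξ - y) μ := (integrable_const ξ).sub hy
  have hac : (volume : Measure ℝ) ≪ μ := by
    rw [hμ]
    refine withDensity_absolutelyContinuous' ?_ ?_
    · exact (ENNReal.measurable_ofReal.comp hp_cont.measurable).aemeasurable
    · exact Filter.Eventually.of_forall fun x => by simpa using hp_pos x
  have hpos : 0 < (∫ y in Set.Iic ξ, (ξ - y) ∂μ) := by
    rw [setIntegral_pos_iff_support_of_nonneg_ae]
    · refine pos_iff_ne_zero.2 fun h0 => ?_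
      have h1 := hac h0
      have h2 : Set.Iio ξ ⊆ Function.support (fun y : ℝ => ξ - y) ∩ Set.Iic ξ := by
        intro y hy
        have hy' : y < ξ := hy
        exact ⟨(sub_pos.2 hy').ne', hy'.le⟩
      have h3 := measure_mono_null h2 h1
      simp at h3
    · refine (ae_restrict_iff' measurableSet_Iic).2 (Filter.Eventually.of_forall fun y hy => ?_)
      exact sub_nonneg.2 hy
    · exact hxy.integrableOn
  have hlampos : 0 < lam := by rw [hlam]; exact inv_pos.2 hpos
  have hnn : ∀ y, 0 ≤ hstar y := by
    intro y
    rw [hhstar]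
    split_ifs with hc
    · exact mul_nonneg hlampos.le (sub_nonneg.2 hc)
    · exact le_rfl
  have hind : hstar = (Set.Iic ξ).indicator (fun y => lam * (ξ - y)) := by
    funext y
    rw [hhstar, Set.indicator_apply]
    rfl
  have hsL2 : MemLp hstar 2 μ := by
    rw [hind]
    exact (((memLp_const ξ).sub hmeas2).const_mul lam).indicator measurableSet_Iic
  have hsint : Integrable hstar μ := hsL2.integrable (by norm_num)
  have hI1 : (∫ y, hstar y ∂μ) = 1 := by
    rw [hind, integral_indicator measurableSet_Iic, integral_const_mul, hlam]
    exact inv_mul_cancel₀ hpos.ne'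
  have hI2 : (∫ y, y * hstar y ∂μ) = (∫ y, y ∂μ) - θ := by
    have : (fun y => y * hstar y) = (Set.Iic ξ).indicator (fun y => lam * ((ξ - y) * y)) := by
      funext y
      rw [hind, Set.indicator_apply, Set.indicator_apply]
      split_ifs <;> ring
    rw [this, integral_indicator measurableSet_Iic, integral_const_mul, hroot, hlam]
    field_simp
  refine ⟨hpos, hnn, hI1, hI2, ?_⟩
  intro h hm h0 h1 h2
  by_cases htop : (∫⁻ y, ENNReal.ofReal (h y ^ 2) ∂μ) = ⊤
  · rw [htop]; exact le_top
  have hsq : Integrable (fun y => h y ^ 2) μ := by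
    refine ⟨(hm.pow_const 2).aestronglyMeasurable, ?_⟩
    rw [hasFiniteIntegral_iff_ofReal (Filter.Eventually.of_forall fun y => sq_nonneg _)]
    exact lt_top_iff_ne_top.2 htop
  have hL2 : MemLp h 2 μ := (memLp_two_iff_integrable_sq hm.aestronglyMeasurable).2 hsq
  have hhint : Integrable h μ := hL2.integrable (by norm_num)
  have hyh : Integrable (fun y => y * h y) μ := hmeas2.integrable_mul hL2
  have hys : Integrable (fun y => y * hstar y) μ := hmeas2.integrable_mul hsL2
  have hssq : Integrable (fun y => hstar y ^ 2) μ := hsL2.integrable_sq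
  rw [← ofReal_integral_eq_lintegral_ofReal hssq (Filter.Eventually.of_forall fun y => sq_nonneg _),
    ← ofReal_integral_eq_lintegral_ofReal hsq (Filter.Eventually.of_forall fun y => sq_nonneg _)]
  apply ENNReal.ofReal_le_ofReal
  have e1 : (∫ y, hstar y ^ 2 ∂μ) = lam * (ξ * (∫ y, hstar y ∂μ) - ∫ y, y * hstar y ∂μ) := by
    rw [← integral_const_mul, ← integral_sub (hsint.const_mul ξ) hys, ← integral_const_mul]
    congr 1
    funext y
    rw [hhstar]
    split_ifs <;> ring
  have e2 : (∫ y, (2 * (lam * (ξ * h y - y * h y)) - hstar y ^ 2) ∂μ)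
      = 2 * (lam * (ξ * (∫ y, h y ∂μ) - ∫ y, y * h y ∂μ)) - ∫ y, hstar y ^ 2 ∂μ := by
    have hd : Integrable (fun y => 2 * (lam * (ξ * h y - y * h y))) μ :=
      (((hhint.const_mul ξ).sub hyh).const_mul lam).const_mul 2
    rw [integral_sub hd hssq,
      integral_const_mul, integral_const_mul, integral_sub (hhint.const_mul ξ) hyh,
      integral_const_mul]
  have e3 : (∫ y, (2 * (lam * (ξ * h y - y * h y)) - hstar y ^ 2) ∂μ) ≤ ∫ y, h y ^ 2 ∂μ := by
    refine integral_mono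
      (((((hhint.const_mul ξ).sub hyh).const_mul lam).const_mul 2).sub hssq) hsq fun y => ?_
    have hk : lam * (ξ - y) ≤ hstar y := by
      rw [hhstar]
      split_ifs with hc
      · exact le_rfl
      · exact mul_nonpos_of_nonneg_of_nonpos hlampos.le (by linarith)
    have := mul_le_mul_of_nonneg_right hk (h0 y)
    show 2 * (lam * (ξ * h y - y * h y)) - hstar y ^ 2 ≤ h y ^ 2
    nlinarith [sq_nonneg (h y - hstar y)]
  rw [e2, h1] at e3
  rw [hI1, hI2] at e1
  have := mul_le_mul_of_nonneg_left h2 hlampos.le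
  nlinarith
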